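/- Let (Σ, g) be a 2-dimensional Riemannian manifold and K a transverse traceless symmetric 2-tensor. Then (1/2) Δ |K|_g² = |∇K|_g² + R |K|_g², where Δ is the Laplace–Beltrami operator and R the scalar curvature (Calabi–Simons identity). -/

import Mathlib

open scoped BigOperators
noncomputable section

/-- A point in a local coordinate chart of the 2-manifold Σ. -/
abbrev Pt := Fin 2 → ℝ

/-- A metric (or symmetric 2-tensor field) in local coordinates. -/
abbrev Ten2 := Pt → Matrix (Fin 2) (Fin 2) ℝ

/-- Partial derivative ∂_i f. -/
def pd (i : Fin 2) (f : Pt → ℝ) (x : Pt) : ℝ :=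
  fderiv ℝ f x (Pi.single i 1)

/-- Christoffel symbols Γ^k_{ij} of the Levi-Civita connection of `g`. -/
def christoffel (g : Ten2) (k i j : Fin 2) (x : Pt) : ℝ :=
  (1 / 2) * ∑ l, (g x)⁻¹ k l *
    (pd i (fun y => g y l j) x + pd j (fun y => g y l i) x - pd l (fun y => g y i j) x)

/-- Riemann curvature tensor R^a_{bcd}. -/
def riemUp (g : Ten2) (a b c d : Fin 2) (x : Pt) : ℝ :=
  pd c (fun y => christoffel g a d b y) x - pd d (fun y => christoffel g a c b y) x
    + ∑ e, christoffel g a c e x * christoffel g e d b x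
    - ∑ e, christoffel g a d e x * christoffel g e c b x

/-- Riemann curvature tensor with all indices lowered, R_{abcd}. -/
def riem (g : Ten2) (a b c d : Fin 2) (x : Pt) : ℝ :=
  ∑ e, g x a e * riemUp g e b c d x

/-- Ricci curvature Ric_{bd}. -/
def ric (g : Ten2) (b d : Fin 2) (x : Pt) : ℝ := ∑ a, riemUp g a b a d x

/-- Scalar curvature R. -/
def scal (g : Ten2) (x : Pt) : ℝ := ∑ b, ∑ d, (g x)⁻¹ b d * ric g b d x

/-- Covariant derivative ∇_c K_{ab} of a covariant 2-tensor `K` w.r.t. `g`. -/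
def covDeriv2 (g : Ten2) (K : Ten2) (c a b : Fin 2) (x : Pt) : ℝ :=
  pd c (fun y => K y a b) x - ∑ d, christoffel g d c a x * K x d b
    - ∑ d, christoffel g d c b x * K x a d

/-- Covariant derivative ∇_d T_{cab} of a covariant 3-tensor `T` w.r.t. `g`. -/
def covDeriv3 (g : Ten2) (T : Fin 2 → Fin 2 → Fin 2 → Pt → ℝ) (d c a b : Fin 2) (x : Pt) : ℝ :=
  pd d (T c a b) x - ∑ e, christoffel g e d c x * T e a b x
    - ∑ e, christoffel g e d a x * T c e b x
    - ∑ e, christoffel g e d b x * T c a e x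

/-- Laplace–Beltrami operator on scalar functions, Δ_g f = g^{ij}(∂_i∂_j f - Γ^k_{ij}∂_k f). -/
def lapScalar (g : Ten2) (f : Pt → ℝ) (x : Pt) : ℝ :=
  ∑ i, ∑ j, (g x)⁻¹ i j * (pd i (pd j f) x - ∑ k, christoffel g k i j x * pd k f x)

/-- Squared norm |K|_g² = K_{ab}K^{ab}. -/
def normSq2 (g : Ten2) (K : Ten2) (x : Pt) : ℝ :=
  ∑ a, ∑ b, ∑ c, ∑ d, (g x)⁻¹ a c * (g x)⁻¹ b d * K x a b * K x c d

/-- Squared norm |∇K|_g² = ∇_c K_{ab} ∇^c K^{ab}. -/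
def normSqCov (g : Ten2) (K : Ten2) (x : Pt) : ℝ :=
  ∑ e, ∑ f, ∑ a, ∑ b, ∑ c, ∑ d, (g x)⁻¹ e f * (g x)⁻¹ a c * (g x)⁻¹ b d *
    covDeriv2 g K e a b x * covDeriv2 g K f c d x

/-- Smoothness of a 2-tensor field in local coordinates. -/
def SmoothTen2 (g : Ten2) : Prop := ∀ i j, ContDiff ℝ (⊤ : ℕ∞) fun x => g x i j

/-! Metric compatibility gives Bochner's formula `½ Δ|K|² = |∇K|² + ⟨Δ K, K⟩` with the rough
Laplacian `Δ K = g^{ij} ∇²_{ij} K`, so everything rests on `Δ K = R K`.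

In dimension two `∇_a K_{bc} - ∇_b K_{ac}` is `ε_{ab} v_c`. Its trace is the difference between the
divergence and the gradient of the trace of `K`, which forces `v = 0`: a transverse traceless tensor
is Codazzi. Hence `Δ K_{ab} = g^{ij} ∇²_{ia} K_{jb}`, and commuting the two derivatives leaves
`g^{ij} ∇²_{ai} K_{jb} = ∇²_{ab} (tr K) = 0` plus a curvature term (Simons).

The commutator formula applied to `g` itself shows that the lowered curvature is skew in its first
two indices. In dimension two it is therefore `R/2` times `g_{ac} g_{bd} - g_{ad} g_{bc}`, and
contracting this with the traceless `K` gives `R K`.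
-/

open scoped Matrix

section PartialDerivatives

variable {f h : Pt → ℝ} {x : Pt}

lemma pd_sub (hf : DifferentiableAt ℝ f x) (hh : DifferentiableAt ℝ h x) (i : Fin 2) :
    pd i (fun y => f y - h y) x = pd i f x - pd i h x := by
  simp [pd, fderiv_fun_sub hf hh]

lemma pd_mul (hf : DifferentiableAt ℝ f x) (hh : DifferentiableAt ℝ h x) (i : Fin 2) :
    pd i (fun y => f y * h y) x = pd i f x * h x + f x * pd i h x := by
  simp only [pd, fderiv_fun_mul hf hh, add_apply, smul_apply, smul_eq_mul]
  ring

lemma pd_const (c : ℝ) (i : Fin 2) (x : Pt) : pd i (fun _ => c) x = 0 := by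
  simp [pd]

lemma pd_const_mul (hf : DifferentiableAt ℝ f x) (c : ℝ) (i : Fin 2) :
    pd i (fun y => c * f y) x = c * pd i f x := by
  simp [pd, fderiv_const_mul hf]

lemma pd_sum {ι : Type*} {s : Finset ι} {F : ι → Pt → ℝ}
    (hF : ∀ a ∈ s, DifferentiableAt ℝ (F a) x) (i : Fin 2) :
    pd i (fun y => ∑ a ∈ s, F a y) x = ∑ a ∈ s, pd i (F a) x := by
  simp [pd, fderiv_fun_sum hF]

lemma contDiff_pd {m n : WithTop ℕ∞} (hf : ContDiff ℝ n f) (hmn : m + 1 ≤ n) (i : Fin 2) :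
    ContDiff ℝ m (pd i f) :=
  (hf.fderiv_right hmn).clm_apply contDiff_const

lemma pd_pd_eq_fderiv_fderiv (hf : ContDiff ℝ 2 f) (i j : Fin 2) (x : Pt) :
    pd i (pd j f) x = fderiv ℝ (fderiv ℝ f) x (Pi.single i 1) (Pi.single j 1) := by
  have hf' : DifferentiableAt ℝ (fderiv ℝ f) x :=
    (hf.fderiv_right (m := 1) (by norm_num)).differentiable (by norm_num) x
  change fderiv ℝ (fun y => fderiv ℝ f y (Pi.single j 1)) x (Pi.single i 1) = _
  simp [fderiv_clm_apply hf' (differentiableAt_const _)]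

lemma pd_comm (hf : ContDiff ℝ 2 f) (i j : Fin 2) (x : Pt) :
    pd i (pd j f) x = pd j (pd i f) x := by
  rw [pd_pd_eq_fderiv_fderiv hf, pd_pd_eq_fderiv_fderiv hf]
  exact hf.contDiffAt.isSymmSndFDerivAt (by simp) _ _

end PartialDerivatives

section MatrixFields

/-- Entrywise regularity of a matrix field, so that `SmoothTen2` is the case `k = ∞`. -/
def ContDiffTen2 (k : WithTop ℕ∞) (A : Ten2) : Prop := ∀ i j, ContDiff ℝ k fun x => A x i j

/-- The entrywise partial derivative `∂_i A` of a matrix field. -/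
def pdTen2 (i : Fin 2) (A : Ten2) : Ten2 := fun x => Matrix.of fun a b => pd i (fun y => A y a b) x

variable {A B : Ten2} {k : WithTop ℕ∞}

lemma ContDiffTen2.of_le {m : WithTop ℕ∞} (hA : ContDiffTen2 k A) (h : m ≤ k) :
    ContDiffTen2 m A :=
  fun i j => (hA i j).of_le h

lemma ContDiffTen2.differentiableAt (hA : ContDiffTen2 1 A) (i j : Fin 2) (x : Pt) :
    DifferentiableAt ℝ (fun y => A y i j) x :=
  (hA i j).differentiable one_ne_zero x

lemma ContDiffTen2.transpose (hA : ContDiffTen2 k A) : ContDiffTen2 k fun x => (A x)ᵀ :=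
  fun i j => hA j i

lemma ContDiffTen2.sub (hA : ContDiffTen2 k A) (hB : ContDiffTen2 k B) :
    ContDiffTen2 k fun x => A x - B x :=
  fun i j => (hA i j).sub (hB i j)

lemma ContDiffTen2.mul (hA : ContDiffTen2 k A) (hB : ContDiffTen2 k B) :
    ContDiffTen2 k fun x => A x * B x := fun i j => by
  simp only [Matrix.mul_apply]
  exact ContDiff.sum fun l _ => (hA i l).mul (hB l j)

lemma ContDiffTen2.trace (hA : ContDiffTen2 k A) : ContDiff ℝ k fun x => (A x).trace :=
  ContDiff.sum fun a _ => hA a a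

lemma ContDiffTen2.inv (hA : ContDiffTen2 k A) (hdet : ∀ x, IsUnit (A x).det) :
    ContDiffTen2 k fun x => (A x)⁻¹ := by
  have det_contDiff : ContDiff ℝ k fun x => (A x).det := by
    simp only [Matrix.det_fin_two]
    exact ((hA 0 0).mul (hA 1 1)).sub ((hA 0 1).mul (hA 1 0))
  have adjugate_contDiff : ContDiffTen2 k fun x => (A x).adjugate := fun i j => by
    simp only [Matrix.adjugate_fin_two]
    fin_cases i <;> fin_cases j
    exacts [hA 1 1, (hA 0 1).neg, (hA 1 0).neg, hA 0 0]
  intro i j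
  simp only [Matrix.inv_def, Ring.inverse_eq_inv', Matrix.smul_apply, smul_eq_mul]
  exact (det_contDiff.inv fun x => (hdet x).ne_zero).mul (adjugate_contDiff i j)

lemma contDiffTen2_pdTen2 {m : WithTop ℕ∞} (hA : ContDiffTen2 k A) (h : m + 1 ≤ k) (i : Fin 2) :
    ContDiffTen2 m (pdTen2 i A) :=
  fun a b => contDiff_pd (hA a b) h i

lemma pdTen2_transpose (A : Ten2) (i : Fin 2) (x : Pt) :
    pdTen2 i (fun y => (A y)ᵀ) x = (pdTen2 i A x)ᵀ :=
  rfl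

lemma pdTen2_const (M : Matrix (Fin 2) (Fin 2) ℝ) (i : Fin 2) (x : Pt) :
    pdTen2 i (fun _ => M) x = 0 := by
  ext a b
  exact pd_const (M a b) i x

lemma pdTen2_sub (hA : ContDiffTen2 1 A) (hB : ContDiffTen2 1 B) (i : Fin 2) (x : Pt) :
    pdTen2 i (fun y => A y - B y) x = pdTen2 i A x - pdTen2 i B x := by
  ext a b
  exact pd_sub (hA.differentiableAt a b x) (hB.differentiableAt a b x) i

lemma pdTen2_mul (hA : ContDiffTen2 1 A) (hB : ContDiffTen2 1 B) (i : Fin 2) (x : Pt) :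
    pdTen2 i (fun y => A y * B y) x = pdTen2 i A x * B x + A x * pdTen2 i B x := by
  ext a b
  have hd (l : Fin 2) := hA.differentiableAt a l x
  have hd' (l : Fin 2) := hB.differentiableAt l b x
  simp only [pdTen2, Matrix.of_apply, Matrix.add_apply, Matrix.mul_apply]
  rw [pd_sum (F := fun l y => A y a l * B y l b) fun l _ => (hd l).mul (hd' l),
    ← Finset.sum_add_distrib]
  exact Finset.sum_congr rfl fun l _ => pd_mul (hd l) (hd' l) i

lemma pdTen2_comm (hA : ContDiffTen2 2 A) (i j : Fin 2) (x : Pt) :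
    pdTen2 i (pdTen2 j A) x = pdTen2 j (pdTen2 i A) x := by
  ext a b
  exact pd_comm (hA a b) i j x

lemma pd_trace (hA : ContDiffTen2 1 A) (i : Fin 2) (x : Pt) :
    pd i (fun y => (A y).trace) x = (pdTen2 i A x).trace :=
  pd_sum (fun a _ => hA.differentiableAt a a x) i

lemma pdTen2_inv (hA : ContDiffTen2 1 A) (hdet : ∀ x, IsUnit (A x).det) (i : Fin 2) (x : Pt) :
    pdTen2 i (fun y => (A y)⁻¹) x = -((A x)⁻¹ * pdTen2 i A x * (A x)⁻¹) := by
  have deriv_mul_inv : pdTen2 i (fun y => (A y)⁻¹) x * A x + (A x)⁻¹ * pdTen2 i A x = 0 := by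
    rw [← pdTen2_mul (hA.inv hdet) hA]
    simp only [fun y => Matrix.nonsing_inv_mul (A y) (hdet y), pdTen2_const]
  calc pdTen2 i (fun y => (A y)⁻¹) x
      = pdTen2 i (fun y => (A y)⁻¹) x * A x * (A x)⁻¹ :=
        (Matrix.mul_nonsing_inv_cancel_right _ _ (hdet x)).symm
    _ = -((A x)⁻¹ * pdTen2 i A x * (A x)⁻¹) := by
        rw [eq_neg_of_add_eq_zero_left deriv_mul_inv, neg_mul]

end MatrixFields

section Connection

/-- The connection matrix `Γ_i`, with entry `Γ^k_{ij}` in row `k` and column `j`. -/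
def connMatrix (g : Ten2) (i : Fin 2) : Ten2 :=
  fun x => Matrix.of fun k j => christoffel g k i j x

/-- The covariant derivative `∇_c A` of a covariant 2-tensor field, as the field of its
components `∇_c A_{ab}`. -/
def covDerivTen2 (g : Ten2) (c : Fin 2) (A : Ten2) : Ten2 :=
  fun x => Matrix.of fun a b => covDeriv2 g A c a b x

/-- The curvature matrix `R_{cd}`, with entry `R^a_{bcd}` in row `a` and column `b`. -/
def curvMatrix (g : Ten2) (c d : Fin 2) : Ten2 :=
  fun x => Matrix.of fun a b => riemUp g a b c d x

variable {g A B : Ten2}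

lemma covDerivTen2_eq (g A : Ten2) (c : Fin 2) (x : Pt) :
    covDerivTen2 g c A x =
      pdTen2 c A x - (connMatrix g c x)ᵀ * A x - A x * connMatrix g c x := by
  ext a b
  simp [covDerivTen2, covDeriv2, pdTen2, connMatrix, Matrix.mul_apply, mul_comm]

lemma curvMatrix_eq (g : Ten2) (c d : Fin 2) (x : Pt) :
    curvMatrix g c d x = pdTen2 c (connMatrix g d) x - pdTen2 d (connMatrix g c) x
      + connMatrix g c x * connMatrix g d x - connMatrix g d x * connMatrix g c x := by
  ext a b
  simp [curvMatrix, riemUp, pdTen2, connMatrix, Matrix.mul_apply]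

lemma curvMatrix_swap (g : Ten2) (c d : Fin 2) (x : Pt) :
    curvMatrix g d c x = -curvMatrix g c d x := by
  rw [curvMatrix_eq, curvMatrix_eq]
  abel

lemma covDerivTen2_transpose (g A : Ten2) (c : Fin 2) (x : Pt) :
    covDerivTen2 g c (fun y => (A y)ᵀ) x = (covDerivTen2 g c A x)ᵀ := by
  simp only [covDerivTen2_eq, pdTen2_transpose, Matrix.transpose_sub, Matrix.transpose_mul,
    Matrix.transpose_transpose]
  abel

lemma contDiffTen2_covDerivTen2 {c : Fin 2} {k m : WithTop ℕ∞} (hA : ContDiffTen2 k A)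
    (hmk : m + 1 ≤ k) (hΓ : ContDiffTen2 m (connMatrix g c)) :
    ContDiffTen2 m (covDerivTen2 g c A) := by
  have hA' : ContDiffTen2 m A := hA.of_le (le_self_add.trans hmk)
  simpa only [← covDerivTen2_eq] using
    ((contDiffTen2_pdTen2 hA hmk c).sub (hΓ.transpose.mul hA')).sub (hA'.mul hΓ)

lemma pdTen2_covDerivTen2 {d : Fin 2} (hΓ : ContDiffTen2 1 (connMatrix g d))
    (hA : ContDiffTen2 2 A) (c : Fin 2) (x : Pt) :
    pdTen2 c (covDerivTen2 g d A) x = pdTen2 c (pdTen2 d A) x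
      - ((pdTen2 c (connMatrix g d) x)ᵀ * A x + (connMatrix g d x)ᵀ * pdTen2 c A x)
      - (pdTen2 c A x * connMatrix g d x + A x * pdTen2 c (connMatrix g d) x) := by
  have hA₁ : ContDiffTen2 1 A := hA.of_le one_le_two
  have hdA : ContDiffTen2 1 (pdTen2 d A) := contDiffTen2_pdTen2 hA one_add_one_eq_two.le d
  rw [funext (covDerivTen2_eq g A d),
    pdTen2_sub (hdA.sub (hΓ.transpose.mul hA₁)) (hA₁.mul hΓ),
    pdTen2_sub hdA (hΓ.transpose.mul hA₁), pdTen2_mul hΓ.transpose hA₁, pdTen2_mul hA₁ hΓ,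
    pdTen2_transpose]

lemma covDerivTen2_commutator (hΓ : ∀ i, ContDiffTen2 1 (connMatrix g i))
    (hA : ContDiffTen2 2 A) (c d : Fin 2) (x : Pt) :
    covDerivTen2 g c (covDerivTen2 g d A) x - covDerivTen2 g d (covDerivTen2 g c A) x =
      -((curvMatrix g c d x)ᵀ * A x) - A x * curvMatrix g c d x := by
  rw [covDerivTen2_eq g (covDerivTen2 g d A), covDerivTen2_eq g (covDerivTen2 g c A),
    pdTen2_covDerivTen2 (hΓ d) hA, pdTen2_covDerivTen2 (hΓ c) hA, pdTen2_comm hA d c,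
    curvMatrix_eq, covDerivTen2_eq, covDerivTen2_eq]
  simp only [Matrix.transpose_add, Matrix.transpose_sub, Matrix.transpose_mul]
  noncomm_ring

end Connection

section Metric

/-- Nondegenerate symmetric metrics of arbitrary signature. -/
structure IsPseudoRiemannian (g : Ten2) : Prop where
  isSymm : ∀ x, (g x).IsSymm
  isUnit_det : ∀ x, IsUnit (g x).det

/-- The Christoffel symbols of the first kind `Γ_{l,ij}`, in row `l` and column `j`. -/
def christoffelFirst (g : Ten2) (i : Fin 2) : Ten2 :=
  fun x => Matrix.of fun l j => (1 / 2) *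
    (pd i (fun y => g y l j) x + pd j (fun y => g y l i) x - pd l (fun y => g y i j) x)

variable {g A B : Ten2}

lemma connMatrix_eq_inv_mul (g : Ten2) (i : Fin 2) (x : Pt) :
    connMatrix g i x = (g x)⁻¹ * christoffelFirst g i x := by
  ext k j
  simp only [connMatrix, christoffel, christoffelFirst, Matrix.of_apply, Matrix.mul_apply,
    Finset.mul_sum, mul_left_comm]

lemma contDiffTen2_christoffelFirst {k m : WithTop ℕ∞} (hg : ContDiffTen2 k g) (h : m + 1 ≤ k)
    (i : Fin 2) : ContDiffTen2 m (christoffelFirst g i) := fun l j =>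
  contDiff_const.mul (((contDiff_pd (hg l j) h i).add (contDiff_pd (hg l i) h j)).sub
    (contDiff_pd (hg i j) h l))

lemma contDiffTen2_connMatrix {k m : WithTop ℕ∞} (hg : ContDiffTen2 k g)
    (hdet : ∀ x, IsUnit (g x).det) (h : m + 1 ≤ k) (i : Fin 2) :
    ContDiffTen2 m (connMatrix g i) := by
  rw [funext (connMatrix_eq_inv_mul g i)]
  exact ((hg.of_le (le_self_add.trans h)).inv hdet).mul (contDiffTen2_christoffelFirst hg h i)

namespace IsPseudoRiemannian

lemma isSymm_inv (hg : IsPseudoRiemannian g) (x : Pt) : (g x)⁻¹.IsSymm := by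
  rw [Matrix.IsSymm, Matrix.transpose_nonsing_inv, hg.isSymm x]

lemma mul_connMatrix (hg : IsPseudoRiemannian g) (i : Fin 2) (x : Pt) :
    g x * connMatrix g i x = christoffelFirst g i x := by
  rw [connMatrix_eq_inv_mul, Matrix.mul_nonsing_inv_cancel_left _ _ (hg.isUnit_det x)]

lemma connMatrix_transpose_mul (hg : IsPseudoRiemannian g) (i : Fin 2) (x : Pt) :
    (connMatrix g i x)ᵀ * g x = (christoffelFirst g i x)ᵀ := by
  rw [← hg.mul_connMatrix, Matrix.transpose_mul, hg.isSymm x]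

lemma pdTen2_self (hg : IsPseudoRiemannian g) (c : Fin 2) (x : Pt) :
    pdTen2 c g x = (connMatrix g c x)ᵀ * g x + g x * connMatrix g c x := by
  rw [hg.mul_connMatrix, hg.connMatrix_transpose_mul]
  have hsymm (i j : Fin 2) : (fun y => g y i j) = fun y => g y j i :=
    funext fun y => (hg.isSymm y).apply j i
  ext a b
  simp only [pdTen2, christoffelFirst, Matrix.add_apply, Matrix.transpose_apply, Matrix.of_apply,
    hsymm b a, hsymm c a, hsymm c b]
  ring

lemma covDerivTen2_self (hg : IsPseudoRiemannian g) (c : Fin 2) (x : Pt) :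
    covDerivTen2 g c g x = 0 := by
  rw [covDerivTen2_eq, hg.pdTen2_self]
  abel

lemma pdTen2_inv_self (hg : IsPseudoRiemannian g) (hgd : ContDiffTen2 1 g) (c : Fin 2) (x : Pt) :
    pdTen2 c (fun y => (g y)⁻¹) x =
      -(connMatrix g c x * (g x)⁻¹) - (g x)⁻¹ * (connMatrix g c x)ᵀ := by
  have hdet := hg.isUnit_det x
  rw [pdTen2_inv hgd hg.isUnit_det, hg.pdTen2_self, mul_add, add_mul,
    Matrix.nonsing_inv_mul_cancel_left _ _ hdet, ← mul_assoc,
    Matrix.mul_nonsing_inv_cancel_right _ _ hdet]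
  abel

lemma pd_trace_inv_mul (hg : IsPseudoRiemannian g) (hgd : ContDiffTen2 1 g)
    (hA : ContDiffTen2 1 A) (c : Fin 2) (x : Pt) :
    pd c (fun y => ((g y)⁻¹ * A y).trace) x = ((g x)⁻¹ * covDerivTen2 g c A x).trace := by
  have hinv : ContDiffTen2 1 fun y => (g y)⁻¹ := hgd.inv hg.isUnit_det
  have hcyc : (connMatrix g c x * (g x)⁻¹ * A x).trace =
      ((g x)⁻¹ * A x * connMatrix g c x).trace := by
    rw [mul_assoc, Matrix.trace_mul_comm]
  rw [pd_trace (hinv.mul hA), pdTen2_mul hinv hA, hg.pdTen2_inv_self hgd, covDerivTen2_eq]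
  simp only [sub_mul, neg_mul, mul_sub, ← mul_assoc, Matrix.trace_add, Matrix.trace_sub,
    Matrix.trace_neg, hcyc]
  ring

lemma covDerivTen2_mul_inv_mul_transpose (hg : IsPseudoRiemannian g) (hgd : ContDiffTen2 1 g)
    (hA : ContDiffTen2 1 A) (hB : ContDiffTen2 1 B) (c : Fin 2) (x : Pt) :
    covDerivTen2 g c (fun y => A y * (g y)⁻¹ * (B y)ᵀ) x =
      covDerivTen2 g c A x * (g x)⁻¹ * (B x)ᵀ
        + A x * (g x)⁻¹ * (covDerivTen2 g c B x)ᵀ := by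
  have hinv : ContDiffTen2 1 fun y => (g y)⁻¹ := hgd.inv hg.isUnit_det
  rw [covDerivTen2_eq, pdTen2_mul (hA.mul hinv) hB.transpose, pdTen2_mul hA hinv,
    hg.pdTen2_inv_self hgd, pdTen2_transpose, covDerivTen2_eq, covDerivTen2_eq]
  simp only [Matrix.transpose_sub, Matrix.transpose_mul, Matrix.transpose_transpose]
  noncomm_ring

lemma curvMatrix_skew (hg : IsPseudoRiemannian g) (hgd : ContDiffTen2 2 g) (c d : Fin 2) (x : Pt) :
    (g x * curvMatrix g c d x)ᵀ = -(g x * curvMatrix g c d x) := by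
  have hΓ := contDiffTen2_connMatrix hgd hg.isUnit_det one_add_one_eq_two.le
  have covDeriv_zero (c : Fin 2) : covDerivTen2 g c (fun _ => 0) x = 0 := by
    simp [covDerivTen2_eq, pdTen2_const]
  have hcomm := covDerivTen2_commutator hΓ hgd c d x
  rw [funext (hg.covDerivTen2_self c), funext (hg.covDerivTen2_self d), covDeriv_zero,
    covDeriv_zero, sub_self] at hcomm
  rw [Matrix.transpose_mul, hg.isSymm x]
  exact neg_eq_iff_eq_neg.mp (sub_eq_zero.mp hcomm.symm)

end IsPseudoRiemannian

end Metric

section Contraction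

variable {n R : Type*} [Fintype n] [DecidableEq n] [CommRing R]

/-- The bilinear form `⟨A, B⟩ = A_{ab} B^{ab}` which the metric matrix `G` induces on covariant
2-tensors. It is encoded as the trace, with respect to `G`, of the 2-tensor `A G⁻¹ Bᵀ`. -/
def contractionForm (G : Matrix n n R) : LinearMap.BilinForm R (Matrix n n R) :=
  LinearMap.mk₂ R (fun A B => (G⁻¹ * (A * G⁻¹ * Bᵀ)).trace)
    (fun A A' B => by simp [add_mul, mul_add])
    (fun r A B => by simp)
    (fun A B B' => by simp [mul_add])
    (fun r A B => by simp)

lemma contractionForm_comm {G : Matrix n n R} (hG : G⁻¹.IsSymm) (A B : Matrix n n R) :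
    contractionForm G A B = contractionForm G B A := by
  change (G⁻¹ * (A * G⁻¹ * Bᵀ)).trace = (G⁻¹ * (B * G⁻¹ * Aᵀ)).trace
  rw [← Matrix.trace_transpose, Matrix.trace_mul_comm G⁻¹ (B * G⁻¹ * Aᵀ)]
  simp only [Matrix.transpose_mul, Matrix.transpose_transpose, hG.eq, mul_assoc]

lemma contractionForm_eq_sum {G : Matrix (Fin 2) (Fin 2) R} (hG : G⁻¹.IsSymm)
    (A B : Matrix (Fin 2) (Fin 2) R) :
    contractionForm G A B = ∑ a, ∑ b, ∑ c, ∑ d, G⁻¹ a c * G⁻¹ b d * A a b * B c d := by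
  change (G⁻¹ * (A * G⁻¹ * Bᵀ)).trace = _
  simp only [Matrix.trace, Matrix.diag_apply, Matrix.mul_apply, Matrix.transpose_apply,
    Fin.sum_univ_two, hG.apply 0 1]
  ring

end Contraction

section Bochner

/-- The components `∇²_{ij} A_{ab}` of the second covariant derivative, as a matrix field in
`a, b`; the first index `i` is that of the outer derivative. -/
def secondCovDeriv (g : Ten2) (i j : Fin 2) (A : Ten2) : Ten2 :=
  fun x => Matrix.of fun a b => covDeriv3 g (covDeriv2 g A) i j a b x

/-- The rough Laplacian `g^{ij} ∇²_{ij} A`. -/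
def roughLaplacian (g A : Ten2) : Ten2 :=
  fun x => ∑ i, ∑ j, (g x)⁻¹ i j • secondCovDeriv g i j A x

variable {g A B K : Ten2}

lemma secondCovDeriv_eq (g A : Ten2) (i j : Fin 2) (x : Pt) :
    secondCovDeriv g i j A x = covDerivTen2 g i (covDerivTen2 g j A) x
      - ∑ k, christoffel g k i j x • covDerivTen2 g k A x := by
  rw [covDerivTen2_eq g (covDerivTen2 g j A)]
  ext a b
  simp only [secondCovDeriv, covDeriv3, pdTen2, connMatrix, covDerivTen2, Matrix.of_apply,
    Matrix.sub_apply, Matrix.sum_apply, Matrix.smul_apply, Matrix.mul_apply,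
    Matrix.transpose_apply, smul_eq_mul, mul_comm (covDeriv2 _ _ _ _ _ _)]
  ring

namespace IsPseudoRiemannian

lemma pd_contractionForm (hg : IsPseudoRiemannian g) (hgd : ContDiffTen2 1 g)
    (hA : ContDiffTen2 1 A) (hB : ContDiffTen2 1 B) (i : Fin 2) (x : Pt) :
    pd i (fun y => contractionForm (g y) (A y) (B y)) x =
      contractionForm (g x) (covDerivTen2 g i A x) (B x)
        + contractionForm (g x) (A x) (covDerivTen2 g i B x) := by
  have hAB : ContDiffTen2 1 fun y => A y * (g y)⁻¹ * (B y)ᵀ :=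
    (hA.mul (hgd.inv hg.isUnit_det)).mul hB.transpose
  refine (hg.pd_trace_inv_mul hgd hAB i x).trans ?_
  rw [hg.covDerivTen2_mul_inv_mul_transpose hgd hA hB, mul_add, Matrix.trace_add]
  rfl

lemma contDiff_contractionForm (hg : IsPseudoRiemannian g) (hgd : ContDiffTen2 1 g)
    (hA : ContDiffTen2 1 A) (hB : ContDiffTen2 1 B) :
    ContDiff ℝ 1 fun y => contractionForm (g y) (A y) (B y) :=
  have hinv := hgd.inv hg.isUnit_det
  (hinv.mul ((hA.mul hinv).mul hB.transpose)).trace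

lemma normSq2_eq (hg : IsPseudoRiemannian g) (K : Ten2) (x : Pt) :
    normSq2 g K x = contractionForm (g x) (K x) (K x) :=
  (contractionForm_eq_sum (hg.isSymm_inv x) _ _).symm

lemma normSqCov_eq (hg : IsPseudoRiemannian g) (K : Ten2) (x : Pt) :
    normSqCov g K x = ∑ i, ∑ j, (g x)⁻¹ i j *
      contractionForm (g x) (covDerivTen2 g i K x) (covDerivTen2 g j K x) := by
  simp only [normSqCov, contractionForm_eq_sum (hg.isSymm_inv x), covDerivTen2, Matrix.of_apply,
    Finset.mul_sum, mul_assoc]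

lemma pd_normSq2 (hg : IsPseudoRiemannian g) (hgd : ContDiffTen2 1 g) (hK : ContDiffTen2 1 K)
    (j : Fin 2) (x : Pt) :
    pd j (normSq2 g K) x = 2 * contractionForm (g x) (covDerivTen2 g j K x) (K x) := by
  rw [funext (hg.normSq2_eq K), hg.pd_contractionForm hgd hK hK,
    contractionForm_comm (hg.isSymm_inv x) (K x), two_mul]

lemma hessian_normSq2 (hg : IsPseudoRiemannian g) (hgd : ContDiffTen2 2 g) (hK : ContDiffTen2 2 K)
    (i j : Fin 2) (x : Pt) :
    pd i (pd j (normSq2 g K)) x - ∑ k, christoffel g k i j x * pd k (normSq2 g K) x =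
      2 * (contractionForm (g x) (secondCovDeriv g i j K x) (K x)
        + contractionForm (g x) (covDerivTen2 g j K x) (covDerivTen2 g i K x)) := by
  have hgd₁ : ContDiffTen2 1 g := hgd.of_le one_le_two
  have hK₁ : ContDiffTen2 1 K := hK.of_le one_le_two
  have h₂ : (1 + 1 : WithTop ℕ∞) ≤ 2 := one_add_one_eq_two.le
  have hDK : ContDiffTen2 1 (covDerivTen2 g j K) :=
    contDiffTen2_covDerivTen2 hK h₂ (contDiffTen2_connMatrix hgd hg.isUnit_det h₂ j)
  have hd := (hg.contDiff_contractionForm hgd₁ hDK hK₁).differentiable one_ne_zero x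
  simp only [funext (hg.pd_normSq2 hgd₁ hK₁ _), pd_const_mul hd,
    hg.pd_contractionForm hgd₁ hDK hK₁, secondCovDeriv_eq, map_sub, map_sum, map_smul,
    LinearMap.sub_apply, LinearMap.sum_apply, LinearMap.smul_apply, smul_eq_mul,
    mul_left_comm _ (2 : ℝ), ← Finset.mul_sum]
  ring

lemma half_lapScalar_normSq2 (hg : IsPseudoRiemannian g) (hgd : ContDiffTen2 2 g)
    (hK : ContDiffTen2 2 K) (x : Pt) :
    (1 / 2) * lapScalar g (normSq2 g K) x =
      normSqCov g K x + contractionForm (g x) (roughLaplacian g K x) (K x) := by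
  simp only [lapScalar, hg.hessian_normSq2 hgd hK, hg.normSqCov_eq, roughLaplacian, map_sum,
    map_smul, LinearMap.sum_apply, LinearMap.smul_apply, smul_eq_mul, Finset.mul_sum,
    ← Finset.sum_add_distrib]
  refine Finset.sum_congr rfl fun i _ => Finset.sum_congr rfl fun j _ => ?_
  rw [contractionForm_comm (hg.isSymm_inv x) (covDerivTen2 g j K x)]
  ring

end IsPseudoRiemannian

end Bochner

section Codazzi

/-- Codazzi tensors: `∇_a K_{bc}` is symmetric in `a` and `b`. -/
def IsCodazzi (g K : Ten2) : Prop :=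
  ∀ x a b c, covDerivTen2 g a K x b c = covDerivTen2 g b K x a c

variable {g K : Ten2}

-- The difference `T_{abc} - T_{bac}` is `ε_{ab} v_c`, and the two contractions say that `H v = 0`.
lemma swap_eq_of_contractions_eq_zero {R : Type*} [CommRing R] [IsDomain R]
    {H : Matrix (Fin 2) (Fin 2) R} (hH : H.det ≠ 0) {T : Fin 2 → Matrix (Fin 2) (Fin 2) R}
    (hsymm : ∀ c, (T c).IsSymm) (htrace : ∀ c, ∑ a, ∑ b, H a b * T c a b = 0)
    (hdiv : ∀ b, ∑ c, ∑ a, H c a * T c a b = 0) (a b c : Fin 2) : T a b c = T b a c := by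
  have mulVec_eq_zero : H *ᵥ (fun c => T 0 1 c - T 1 0 c) = 0 := by
    have htrace₀ := htrace 0
    have htrace₁ := htrace 1
    have hdiv₀ := hdiv 0
    have hdiv₁ := hdiv 1
    simp only [Fin.sum_univ_two, (hsymm _).apply 0 1] at htrace₀ htrace₁ hdiv₀ hdiv₁
    ext i
    fin_cases i <;> simp only [Matrix.mulVec, dotProduct, Fin.sum_univ_two, Pi.zero_apply,
      Fin.zero_eta, Fin.mk_one, (hsymm _).apply 0 1]
    · linear_combination hdiv₁ - htrace₁
    · linear_combination htrace₀ - hdiv₀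
  have hswap (c : Fin 2) : T 0 1 c = T 1 0 c :=
    sub_eq_zero.mp (congrFun (Matrix.eq_zero_of_mulVec_eq_zero hH mulVec_eq_zero) c)
  fin_cases a <;> fin_cases b
  exacts [rfl, hswap c, (hswap c).symm, rfl]

lemma isSymm_covDerivTen2 (hK : ∀ x, (K x).IsSymm) (g : Ten2) (c : Fin 2) (x : Pt) :
    (covDerivTen2 g c K x).IsSymm := by
  have hKt : (fun y => (K y)ᵀ) = K := funext hK
  rw [Matrix.IsSymm, ← covDerivTen2_transpose, hKt]

lemma isSymm_secondCovDeriv (hK : ∀ x, (K x).IsSymm) (g : Ten2) (i j : Fin 2) (x : Pt) :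
    (secondCovDeriv g i j K x).IsSymm := by
  rw [Matrix.IsSymm, secondCovDeriv_eq, Matrix.transpose_sub, Matrix.transpose_sum,
    isSymm_covDerivTen2 (isSymm_covDerivTen2 hK g j) g i x]
  simp only [Matrix.transpose_smul, (isSymm_covDerivTen2 hK g _ x).eq]

lemma IsCodazzi.secondCovDeriv_swap (hK : IsCodazzi g K) (d a b c : Fin 2) (x : Pt) :
    secondCovDeriv g d a K x b c = secondCovDeriv g d b K x a c := by
  have hswap (y : Pt) (a b c : Fin 2) : covDeriv2 g K a b c y = covDeriv2 g K b a c y := hK y a b c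
  have hswap' : covDeriv2 g K a b c = covDeriv2 g K b a c := funext fun y => hswap y a b c
  simp only [secondCovDeriv, covDeriv3, Matrix.of_apply, hswap', hswap x _ b c, hswap x a _ c,
    hswap x a b]
  ring

namespace IsPseudoRiemannian

lemma trace_inv_mul_eq_sum (hg : IsPseudoRiemannian g) (x : Pt) (A : Matrix (Fin 2) (Fin 2) ℝ) :
    ((g x)⁻¹ * A).trace = ∑ a, ∑ b, (g x)⁻¹ a b * A a b := by
  simp only [Matrix.trace, Matrix.diag_apply, Matrix.mul_apply]
  rw [Finset.sum_comm]
  simp only [(hg.isSymm_inv x).apply]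

lemma trace_inv_mul_covDerivTen2 (hg : IsPseudoRiemannian g) (hgd : ContDiffTen2 1 g)
    (hK : ContDiffTen2 1 K) (htrace : ∀ x, ((g x)⁻¹ * K x).trace = 0) (c : Fin 2) (x : Pt) :
    ((g x)⁻¹ * covDerivTen2 g c K x).trace = 0 := by
  rw [← hg.pd_trace_inv_mul hgd hK]
  simp only [htrace, pd_const]

lemma trace_inv_mul_secondCovDeriv (hg : IsPseudoRiemannian g) (hgd : ContDiffTen2 2 g)
    (hK : ContDiffTen2 2 K) (htrace : ∀ x, ((g x)⁻¹ * K x).trace = 0) (i j : Fin 2) (x : Pt) :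
    ((g x)⁻¹ * secondCovDeriv g i j K x).trace = 0 := by
  have hgd₁ : ContDiffTen2 1 g := hgd.of_le one_le_two
  have h₂ : (1 + 1 : WithTop ℕ∞) ≤ 2 := one_add_one_eq_two.le
  have hDK : ContDiffTen2 1 (covDerivTen2 g j K) :=
    contDiffTen2_covDerivTen2 hK h₂ (contDiffTen2_connMatrix hgd hg.isUnit_det h₂ j)
  have hDtrace := hg.trace_inv_mul_covDerivTen2 hgd₁ (hK.of_le one_le_two) htrace
  simp only [secondCovDeriv_eq, mul_sub, Matrix.mul_sum, Matrix.mul_smul, Matrix.trace_sub,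
    Matrix.trace_sum, Matrix.trace_smul, hDtrace,
    hg.trace_inv_mul_covDerivTen2 hgd₁ hDK (hDtrace j), smul_zero, Finset.sum_const_zero, sub_zero]

lemma isCodazzi_of_traceless_of_divergence_eq_zero (hg : IsPseudoRiemannian g)
    (hgd : ContDiffTen2 1 g) (hK : ContDiffTen2 1 K) (hKsymm : ∀ x, (K x).IsSymm)
    (htrace : ∀ x, ((g x)⁻¹ * K x).trace = 0)
    (hdiv : ∀ x b, ∑ c, ∑ a, (g x)⁻¹ c a * covDeriv2 g K c a b x = 0) : IsCodazzi g K := fun x =>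
  have hDtrace (c : Fin 2) : ∑ a, ∑ b, (g x)⁻¹ a b * covDerivTen2 g c K x a b = 0 :=
    (hg.trace_inv_mul_eq_sum x _).symm.trans (hg.trace_inv_mul_covDerivTen2 hgd hK htrace c x)
  swap_eq_of_contractions_eq_zero (Matrix.isUnit_nonsing_inv_det _ (hg.isUnit_det x)).ne_zero
    (fun c => isSymm_covDerivTen2 hKsymm g c x) hDtrace (hdiv x)

lemma secondCovDeriv_sub_swap (hg : IsPseudoRiemannian g) (hgd : ContDiffTen2 2 g)
    (hK : ContDiffTen2 2 K) (i j : Fin 2) (x : Pt) :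
    secondCovDeriv g i j K x - secondCovDeriv g j i K x =
      -((curvMatrix g i j x)ᵀ * K x) - K x * curvMatrix g i j x := by
  have hΓ := contDiffTen2_connMatrix hgd hg.isUnit_det one_add_one_eq_two.le
  have torsion_free (k : Fin 2) : christoffel g k i j x = christoffel g k j i x := by
    have hsymm : (fun y => g y i j) = fun y => g y j i := funext fun y => (hg.isSymm y).apply j i
    simp only [christoffel, hsymm, add_comm]
  rw [secondCovDeriv_eq, secondCovDeriv_eq, ← covDerivTen2_commutator hΓ hK]
  simp only [torsion_free]
  abel

lemma roughLaplacian_apply_of_isCodazzi (hg : IsPseudoRiemannian g) (hgd : ContDiffTen2 2 g)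
    (hK : ContDiffTen2 2 K) (hKsymm : ∀ x, (K x).IsSymm)
    (htrace : ∀ x, ((g x)⁻¹ * K x).trace = 0) (hCod : IsCodazzi g K) (a b : Fin 2) (x : Pt) :
    roughLaplacian g K x a b = ∑ i, ∑ j, (g x)⁻¹ i j *
      (-((curvMatrix g i a x)ᵀ * K x) - K x * curvMatrix g i a x) j b := by
  have hessian_trace : ∑ i, ∑ j, (g x)⁻¹ i j * secondCovDeriv g a i K x j b = 0 := by
    rw [← hg.trace_inv_mul_secondCovDeriv hgd hK htrace a b x, hg.trace_inv_mul_eq_sum]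
    refine Finset.sum_congr rfl fun i _ => Finset.sum_congr rfl fun j _ => ?_
    rw [← (isSymm_secondCovDeriv hKsymm g a i x).apply j b, hCod.secondCovDeriv_swap a i b j x]
  calc roughLaplacian g K x a b
      = ∑ i, ∑ j, (g x)⁻¹ i j * secondCovDeriv g i j K x a b := by
        simp only [roughLaplacian, Matrix.sum_apply, Matrix.smul_apply, smul_eq_mul]
    _ = ∑ i, ∑ j, (g x)⁻¹ i j * secondCovDeriv g i a K x j b := by
        simp only [hCod.secondCovDeriv_swap _ _ a b x]
    _ = ∑ i, ∑ j, (g x)⁻¹ i j * (secondCovDeriv g i a K x - secondCovDeriv g a i K x) j b := by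
        simp only [Matrix.sub_apply, mul_sub, Finset.sum_sub_distrib, hessian_trace, sub_zero]
    _ = _ := by simp only [hg.secondCovDeriv_sub_swap hgd hK]

end IsPseudoRiemannian

end Codazzi

section GaussCurvature

/-- The Gauss curvature `R_{0101} / det g`. -/
def gaussCurvature (g : Ten2) (x : Pt) : ℝ := riem g 0 1 0 1 x / (g x).det

variable {g K : Ten2}

lemma mul_det_eq_of_antisymm {R : Type*} [CommRing R] [NoZeroDivisors R] [CharZero R]
    {T : Fin 2 → Fin 2 → Fin 2 → Fin 2 → R} (hleft : ∀ a b c d, T b a c d = -T a b c d)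
    (hright : ∀ a b c d, T a b d c = -T a b c d) (M : Matrix (Fin 2) (Fin 2) R)
    (a b c d : Fin 2) :
    T a b c d * M.det = T 0 1 0 1 * (M a c * M b d - M a d * M b c) := by
  have hleft₀ (a c d : Fin 2) : T a a c d = 0 := self_eq_neg.mp (hleft a a c d)
  have hright₀ (a b c : Fin 2) : T a b c c = 0 := self_eq_neg.mp (hright a b c c)
  fin_cases a <;> fin_cases b <;> fin_cases c <;> fin_cases d <;>
    simp only [Fin.zero_eta, Fin.mk_one, Matrix.det_fin_two, hleft₀, hright₀, hleft 0 1,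
      hright 0 1 0 1] <;> ring

namespace IsPseudoRiemannian

lemma riem_eq (hg : IsPseudoRiemannian g) (hgd : ContDiffTen2 2 g) (a b c d : Fin 2) (x : Pt) :
    riem g a b c d x = gaussCurvature g x * (g x a c * g x b d - g x a d * g x b c) := by
  have riem_eq_mul_curvMatrix (a b c d : Fin 2) :
      riem g a b c d x = (g x * curvMatrix g c d x) a b := rfl
  have hleft (a b c d : Fin 2) : riem g b a c d x = -riem g a b c d x :=
    congrFun (congrFun (hg.curvMatrix_skew hgd c d x) a) b
  have hright (a b c d : Fin 2) : riem g a b d c x = -riem g a b c d x := by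
    rw [riem_eq_mul_curvMatrix, curvMatrix_swap, mul_neg, Matrix.neg_apply]
    rfl
  rw [gaussCurvature, div_mul_eq_mul_div, eq_div_iff (hg.isUnit_det x).ne_zero]
  exact mul_det_eq_of_antisymm (T := fun a b c d => riem g a b c d x) hleft hright (g x) a b c d

lemma sum_inv_mul (hg : IsPseudoRiemannian g) (x : Pt) (a b : Fin 2) :
    ∑ e, (g x)⁻¹ a e * g x e b = (1 : Matrix (Fin 2) (Fin 2) ℝ) a b := by
  rw [← Matrix.mul_apply, Matrix.nonsing_inv_mul _ (hg.isUnit_det x)]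

lemma sum_sum_inv_mul (hg : IsPseudoRiemannian g) (x : Pt) :
    ∑ a, ∑ b, (g x)⁻¹ a b * g x a b = 2 := by
  rw [← hg.trace_inv_mul_eq_sum, Matrix.nonsing_inv_mul _ (hg.isUnit_det x), Matrix.trace_one,
    Fintype.card_fin, Nat.cast_ofNat]

lemma sum_inv_mul_mul (hg : IsPseudoRiemannian g) (x : Pt) (A : Matrix (Fin 2) (Fin 2) ℝ)
    (a b : Fin 2) : ∑ i, ∑ j, (g x)⁻¹ i j * (g x j a * A i b) = A a b := by
  simp [← mul_assoc, ← Finset.sum_mul, hg.sum_inv_mul, Matrix.one_apply, -Fin.sum_univ_two]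

lemma riemUp_eq (hg : IsPseudoRiemannian g) (hgd : ContDiffTen2 2 g) (a b c d : Fin 2) (x : Pt) :
    riemUp g a b c d x = gaussCurvature g x *
      ((1 : Matrix (Fin 2) (Fin 2) ℝ) a c * g x b d
        - (1 : Matrix (Fin 2) (Fin 2) ℝ) a d * g x b c) := by
  calc riemUp g a b c d x
      = ((g x)⁻¹ * (g x * curvMatrix g c d x)) a b := by
        rw [Matrix.nonsing_inv_mul_cancel_left _ _ (hg.isUnit_det x)]
        rfl
    _ = ∑ e, (g x)⁻¹ a e * riem g e b c d x := rfl
    _ = _ := by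
        simp only [hg.riem_eq hgd, ← hg.sum_inv_mul x a, Finset.sum_mul, Finset.mul_sum,
          ← Finset.sum_sub_distrib]
        exact Finset.sum_congr rfl fun e _ => by ring

lemma ric_eq (hg : IsPseudoRiemannian g) (hgd : ContDiffTen2 2 g) (b d : Fin 2) (x : Pt) :
    ric g b d x = gaussCurvature g x * g x b d := by
  have trace_delta : ∑ a, (1 : Matrix (Fin 2) (Fin 2) ℝ) a a = 2 := by simp
  have contract_delta : ∑ a, (1 : Matrix (Fin 2) (Fin 2) ℝ) a d * g x b a = g x b d := by
    simp [Matrix.one_apply, -Fin.sum_univ_two]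
  simp only [ric, hg.riemUp_eq hgd, ← Finset.mul_sum, Finset.sum_sub_distrib, ← Finset.sum_mul,
    trace_delta, contract_delta]
  ring

lemma scal_eq (hg : IsPseudoRiemannian g) (hgd : ContDiffTen2 2 g) (x : Pt) :
    scal g x = 2 * gaussCurvature g x := by
  simp only [scal, hg.ric_eq hgd, mul_left_comm _ (gaussCurvature g x), ← Finset.mul_sum,
    hg.sum_sum_inv_mul]
  ring

lemma curvature_action_apply (hg : IsPseudoRiemannian g) (hgd : ContDiffTen2 2 g)
    (A : Matrix (Fin 2) (Fin 2) ℝ) (a b c d : Fin 2) (x : Pt) :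
    (-((curvMatrix g c d x)ᵀ * A) - A * curvMatrix g c d x) a b = gaussCurvature g x *
      (g x a c * A d b - g x a d * A c b + g x b c * A a d - g x b d * A a c) := by
  have hleft : ((curvMatrix g c d x)ᵀ * A) a b =
      gaussCurvature g x * (g x a d * A c b - g x a c * A d b) := by
    simp [Matrix.mul_apply, curvMatrix, hg.riemUp_eq hgd, Matrix.one_apply, mul_sub, sub_mul,
      Finset.sum_sub_distrib, mul_assoc, -Fin.sum_univ_two]
  have hright : (A * curvMatrix g c d x) a b =
      gaussCurvature g x * (g x b d * A a c - g x b c * A a d) := by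
    simp [Matrix.mul_apply, curvMatrix, hg.riemUp_eq hgd, Matrix.one_apply, mul_sub,
      Finset.sum_sub_distrib, mul_left_comm, mul_comm, -Fin.sum_univ_two]
  rw [Matrix.sub_apply, Matrix.neg_apply, hleft, hright]
  ring

lemma curvature_action_eq (hg : IsPseudoRiemannian g) (hgd : ContDiffTen2 2 g)
    (hKsymm : ∀ x, (K x).IsSymm) (htrace : ∀ x, ((g x)⁻¹ * K x).trace = 0)
    (a b : Fin 2) (x : Pt) :
    ∑ i, ∑ j, (g x)⁻¹ i j * (-((curvMatrix g i a x)ᵀ * K x) - K x * curvMatrix g i a x) j b =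
      scal g x * K x a b := by
  have contract_metric : ∑ i, ∑ j, (g x)⁻¹ i j * g x j i = 2 := by
    simp only [(hg.isSymm x).apply, hg.sum_sum_inv_mul]
  have contract_K : ∑ i, ∑ j, (g x)⁻¹ i j * K x j i = 0 := by
    simp only [(hKsymm x).apply, ← hg.trace_inv_mul_eq_sum, htrace]
  have contract_left : ∑ i, ∑ j, (g x)⁻¹ i j * (g x j a * K x i b) = K x a b :=
    hg.sum_inv_mul_mul x (K x) a b
  have contract_right : ∑ i, ∑ j, (g x)⁻¹ i j * (g x b i * K x j a) = K x a b := by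
    rw [Finset.sum_comm, ← (hKsymm x).apply, ← hg.sum_inv_mul_mul x (K x) b a]
    simp only [(hg.isSymm x).apply, (hg.isSymm_inv x).apply]
  rw [hg.scal_eq hgd]
  simp only [hg.curvature_action_apply hgd]
  simp only [Fin.sum_univ_two] at contract_metric contract_K contract_left contract_right ⊢
  linear_combination gaussCurvature g x * (K x a b * contract_metric - contract_left
    + contract_right - g x b a * contract_K)

lemma roughLaplacian_eq_scal_smul (hg : IsPseudoRiemannian g) (hgd : ContDiffTen2 2 g)
    (hK : ContDiffTen2 2 K) (hKsymm : ∀ x, (K x).IsSymm)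
    (htrace : ∀ x, ((g x)⁻¹ * K x).trace = 0) (hCod : IsCodazzi g K) (x : Pt) :
    roughLaplacian g K x = scal g x • K x := by
  ext a b
  rw [hg.roughLaplacian_apply_of_isCodazzi hgd hK hKsymm htrace hCod,
    hg.curvature_action_eq hgd hKsymm htrace]
  rfl

end IsPseudoRiemannian

end GaussCurvature

theorem calabi_simons_identity_general {g K : Ten2} (hg : IsPseudoRiemannian g)
    (hgd : ContDiffTen2 2 g) (hK : ContDiffTen2 2 K) (hKsymm : ∀ x, (K x).IsSymm)
    (htrace : ∀ x, ∑ a, ∑ b, (g x)⁻¹ a b * K x a b = 0)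
    (hdiv : ∀ x b, ∑ c, ∑ a, (g x)⁻¹ c a * covDeriv2 g K c a b x = 0) (x : Pt) :
    (1 / 2) * lapScalar g (normSq2 g K) x = normSqCov g K x + scal g x * normSq2 g K x := by
  have htr (x : Pt) : ((g x)⁻¹ * K x).trace = 0 :=
    (hg.trace_inv_mul_eq_sum x (K x)).trans (htrace x)
  have hCod : IsCodazzi g K := hg.isCodazzi_of_traceless_of_divergence_eq_zero
    (hgd.of_le one_le_two) (hK.of_le one_le_two) hKsymm htr hdiv
  rw [hg.half_lapScalar_normSq2 hgd hK, hg.roughLaplacian_eq_scal_smul hgd hK hKsymm htr hCod,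
    map_smul, LinearMap.smul_apply, smul_eq_mul, hg.normSq2_eq]

/-- the Calabi–Simons identity (1/2)Δ|K|_g² = |∇K|_g² + R|K|_g² for a
transverse traceless symmetric 2-tensor `K` on a 2-dimensional Riemannian manifold. -/
theorem calabi_simons_identity (g K : Ten2)
    (hg : SmoothTen2 g) (hK : SmoothTen2 K)
    (hgpos : ∀ x, (g x).PosDef)
    (hKsymm : ∀ x a b, K x a b = K x b a)
    (htrace : ∀ x, ∑ a, ∑ b, (g x)⁻¹ a b * K x a b = 0)
    (hdiv : ∀ x b, ∑ c, ∑ a, (g x)⁻¹ c a * covDeriv2 g K c a b x = 0) :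
    ∀ x, (1 / 2) * lapScalar g (normSq2 g K) x
      = normSqCov g K x + scal g x * normSq2 g K x := by
  have hg_metric : IsPseudoRiemannian g :=
    ⟨fun x => Matrix.isHermitian_iff_isSymm.mp (hgpos x).isHermitian,
      fun x => (hgpos x).det_pos.ne'.isUnit⟩
  have hg₂ : ContDiffTen2 2 g := fun i j => (hg i j).of_le (WithTop.coe_le_coe.mpr le_top)
  have hK₂ : ContDiffTen2 2 K := fun i j => (hK i j).of_le (WithTop.coe_le_coe.mpr le_top)
  exact calabi_simons_identity_general hg_metric hg₂ hK₂ (fun x => .ext fun a b => hKsymm x b a)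
    htrace hdiv
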